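/- Let F be the free group on two generators x and y, let ρ : F → SL(2,ℤ) be the homomorphism sending x to A = [[1,1],[0,1]] and y to B = [[1,0],[-1,1]], and let e : F → ℤ be the homomorphism sending both x and y to 1 (the total exponent sum). Then for every w in F with ρ(w) = 1, the integer e(w) is divisible by 12. -/

import Mathlib

/-- The matrix `A = [[1,1],[0,1]]` as an element of `SL(2,ℤ)`. -/
def A : Matrix.SpecialLinearGroup (Fin 2) ℤ :=
  ⟨!![1, 1; 0, 1], by norm_num [Matrix.det_fin_two_of]⟩

/-- The matrix `B = [[1,0],[-1,1]]` as an element of `SL(2,ℤ)`. -/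
def B : Matrix.SpecialLinearGroup (Fin 2) ℤ :=
  ⟨!![1, 0; -1, 1], by norm_num [Matrix.det_fin_two_of]⟩

/-- The homomorphism from the free group on two generators to `SL(2,ℤ)`
sending the first generator to `A` and the second to `B`. -/
def ρ : FreeGroup (Fin 2) →* Matrix.SpecialLinearGroup (Fin 2) ℤ :=
  FreeGroup.lift (fun i => if i = 0 then A else B)

/-- The total exponent sum homomorphism on the free group on two generators,
sending both generators to `1 ∈ ℤ`. -/
def e : FreeGroup (Fin 2) →* Multiplicative ℤ :=
  FreeGroup.lift (fun _ => Multiplicative.ofAdd (1 : ℤ))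

/-- Explicit formula for the abelianization character, valid modulo 3 and 4. -/
def chiR {R : Type} [CommRing R] (a b c d : R) : R :=
  (1 - c * c) * (b * d + 3 * (c - 1) * d + c + 3) + c * (a + d - 3)

lemma chi_three : ∀ a b c d : ZMod 3, a * d - b * c = 1 →
    chiR (a + c) (b + d) c d = chiR a b c d + 1 ∧
    chiR a b (c - a) (d - b) = chiR a b c d + 1 := by
  unfold chiR
  decide +kernel

lemma chi_four : ∀ a b c d : ZMod 4, a * d - b * c = 1 →
    chiR (a + c) (b + d) c d = chiR a b c d + 1 ∧
    chiR a b (c - a) (d - b) = chiR a b c d + 1 := by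
  unfold chiR
  decide +kernel

def chiM (n : ℕ) (M : Matrix.SpecialLinearGroup (Fin 2) ℤ) : ZMod n :=
  chiR (M.1 0 0 : ZMod n) (M.1 0 1 : ZMod n) (M.1 1 0 : ZMod n) (M.1 1 1 : ZMod n)

lemma chi_word (n : ℕ) (h : ∀ a b c d : ZMod n, a * d - b * c = 1 →
    chiR (a + c) (b + d) c d = chiR a b c d + 1 ∧
    chiR a b (c - a) (d - b) = chiR a b c d + 1) (w : FreeGroup (Fin 2)) :
    ∀ M, chiM n (ρ w * M) = chiM n M + ((Multiplicative.toAdd (e w) : ℤ) : ZMod n) := by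
  have hgen : ∀ (i : Fin 2) M, chiM n (ρ (FreeGroup.of i) * M) =
      chiM n M + ((Multiplicative.toAdd (e (FreeGroup.of i)) : ℤ) : ZMod n) := by
    intro i M
    have hd : ((M.1 0 0 : ℤ) : ZMod n) * (M.1 1 1 : ℤ) - (M.1 0 1 : ℤ) * (M.1 1 0 : ℤ) = 1 := by
      have := M.2
      rw [Matrix.det_fin_two] at this
      exact_mod_cast congrArg (Int.cast : ℤ → ZMod n) this
    obtain ⟨h1, h2⟩ := h _ _ _ _ hd
    have hm : ∀ X Y : Matrix.SpecialLinearGroup (Fin 2) ℤ, (X * Y).1 = X.1 * Y.1 :=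
      fun _ _ => rfl
    have hA : A.1 = !![1, 1; 0, 1] := rfl
    have hB : B.1 = !![1, 0; -1, 1] := rfl
    fin_cases i
    · simpa [hm, chiM, ρ, e, hA, Matrix.mul_apply, Fin.sum_univ_two] using h1
    · simpa [hm, chiM, ρ, e, hB, Matrix.mul_apply, Fin.sum_univ_two, neg_add_eq_sub] using h2
  induction w using FreeGroup.induction_on with
  | C1 => intro M; simp
  | of i => exact hgen i
  | inv_of i ih =>
    intro M
    have := ih ((ρ (FreeGroup.of i))⁻¹ * M)
    rw [mul_inv_cancel_left] at this
    rw [map_inv, map_inv, this]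
    simp
  | mul x y hx hy =>
    intro M
    rw [map_mul, mul_assoc, hx, hy, map_mul, toAdd_mul]
    push_cast
    ring

/-- If a word in `A, B` represents the identity in `SL(2,ℤ)`, then its total
exponent sum is divisible by 12. -/
theorem twelve_dvd_exponent_sum_of_relator (w : FreeGroup (Fin 2)) (hw : ρ w = 1) :
    (12 : ℤ) ∣ Multiplicative.toAdd (e w) := by
  have key : ∀ n : ℕ, (∀ a b c d : ZMod n, a * d - b * c = 1 →
      chiR (a + c) (b + d) c d = chiR a b c d + 1 ∧
      chiR a b (c - a) (d - b) = chiR a b c d + 1) →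
      (n : ℤ) ∣ Multiplicative.toAdd (e w) := by
    intro n h
    have := chi_word n h w 1
    rw [hw, mul_one] at this
    exact (ZMod.intCast_zmod_eq_zero_iff_dvd _ _).1 (left_eq_add.1 this)
  have h3 := key 3 chi_three
  have h4 := key 4 chi_four
  push_cast at h3 h4
  omega
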